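/- arXiv:1312.6323 — 6 statements merged into one kernel-verified Lean document; each statement's English description precedes it below -/
import Mathlib

section
/- If S is a separated C-structure, then every element a of S has at most one decomposition: if a hyper-term t is a decomposition of a and a hyper-term t' is also a decomposition of a, then t = t'. -/
open PFunctor

/-- The polynomial functor of a constructor vocabulary `C` with arities `arity`.
Hyper-terms over `C` are the elements of `(PF C arity).M`. -/
def PF (C : Type) (arity : C → ℕ) : PFunctor := ⟨C, fun c => Fin (arity c)⟩

/-- A `C`-structure `interp` on `S` is *separated* if each constructor is interpreted
injectively and distinct constructors have disjoint ranges. -/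
def Separated {C : Type} {arity : C → ℕ} {S : Type*}
    (interp : ∀ c : C, (Fin (arity c) → S) → S) : Prop :=
  (∀ c, Function.Injective (interp c)) ∧
    ∀ c d, c ≠ d → Disjoint (Set.range (interp c)) (Set.range (interp d))

/-- A decomposition relation between hyper-terms and elements of a `C`-structure. -/
def IsDecompRel {C : Type} {arity : C → ℕ} {S : Type*}
    (interp : ∀ c : C, (Fin (arity c) → S) → S)
    (R : (PF C arity).M → S → Prop) : Prop :=
  ∀ t a, R t a → ∃ (c : C) (f : Fin (arity c) → (PF C arity).M) (b : Fin (arity c) → S),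
    t = PFunctor.M.mk ⟨c, f⟩ ∧ a = interp c b ∧ ∀ i, R (f i) (b i)

/-- A hyper-term `t` is a decomposition of `a : S` if `R t a` for some
decomposition relation `R`. -/
def IsDecomposition {C : Type} {arity : C → ℕ} {S : Type*}
    (interp : ∀ c : C, (Fin (arity c) → S) → S)
    (t : (PF C arity).M) (a : S) : Prop :=
  ∃ R, IsDecompRel interp R ∧ R t a

/-!
Separatedness says that the structure map `P S → S`, `⟨c, b⟩ ↦ interp c b`, is injective. An element
therefore determines the root constructor of each of its decompositions and the elements that the
children decompose, so decomposing a common element is a bisimulation on hyper-terms.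
-/

section Algebra

variable {P : PFunctor} {S : Type*} {α : P S → S}

/-- Decomposition relations for an arbitrary algebra `α : P S → S` of a polynomial functor.
A `C`-structure `interp` is the algebra `fun x => interp x.1 x.2` of `PF C arity`, for which this
unfolds to `IsDecompRel interp`. -/
def IsAlgebraDecompRel (α : P S → S) (R : P.M → S → Prop) : Prop :=
  ∀ t a, R t a → ∃ (c : P.A) (f : P.B c → P.M) (b : P.B c → S),
    t = M.mk ⟨c, f⟩ ∧ a = α ⟨c, b⟩ ∧ ∀ i, R (f i) (b i)

/-- The tree `t` is a decomposition of `a` in the algebra `α`: the analogue of `IsDecomposition`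
for an arbitrary polynomial functor. -/
def IsAlgebraDecomposition (α : P S → S) (t : P.M) (a : S) : Prop :=
  ∃ R, IsAlgebraDecompRel α R ∧ R t a

theorem isAlgebraDecompRel_isAlgebraDecomposition :
    IsAlgebraDecompRel α (IsAlgebraDecomposition α) := by
  rintro t a ⟨R, hR, hta⟩
  obtain ⟨c, f, b, ht, ha, hfb⟩ := hR t a hta
  exact ⟨c, f, b, ht, ha, fun i => ⟨R, hR, hfb i⟩⟩

theorem exists_dest_eq_of_isAlgebraDecomposition (hα : Function.Injective α) {a : S} {t t' : P.M}
    (h : IsAlgebraDecomposition α t a) (h' : IsAlgebraDecomposition α t' a) :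
    ∃ (c : P.A) (f f' : P.B c → P.M), t.dest = ⟨c, f⟩ ∧ t'.dest = ⟨c, f'⟩ ∧
      ∀ i, ∃ b, IsAlgebraDecomposition α (f i) b ∧ IsAlgebraDecomposition α (f' i) b := by
  obtain ⟨c, f, b, rfl, hb, hfb⟩ := isAlgebraDecompRel_isAlgebraDecomposition t a h
  obtain ⟨c', f', b', rfl, hb', hfb'⟩ := isAlgebraDecompRel_isAlgebraDecomposition t' a h'
  have same_node : (⟨c, b⟩ : P S) = ⟨c', b'⟩ := hα (hb.symm.trans hb')
  cases same_node
  exact ⟨c, f, f', M.dest_mk _, M.dest_mk _, fun i => ⟨b i, hfb i, hfb' i⟩⟩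

theorem decomposition_unique_general (hα : Function.Injective α) {a : S} {t t' : P.M}
    (h : IsAlgebraDecomposition α t a) (h' : IsAlgebraDecomposition α t' a) : t = t' :=
  M.bisim (fun u v => ∃ b, IsAlgebraDecomposition α u b ∧ IsAlgebraDecomposition α v b)
    (fun _ _ ⟨_, hu, hv⟩ => exists_dest_eq_of_isAlgebraDecomposition hα hu hv) t t' ⟨a, h, h'⟩

end Algebra

theorem Separated.injective_algebra {C : Type} {arity : C → ℕ} {S : Type*}
    {interp : ∀ c : C, (Fin (arity c) → S) → S} (hsep : Separated interp) :
    Function.Injective fun x : PF C arity S => interp x.1 x.2 := by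
  rintro ⟨c, b⟩ ⟨d, e⟩ (heq : interp c b = interp d e)
  obtain rfl : c = d := by
    by_contra hcd
    exact Set.disjoint_range_iff.mp (hsep.2 c d hcd) b e heq
  obtain rfl : b = e := hsep.1 c heq
  rfl

/-- In a separated `C`-structure, every element has at most one decomposition. -/
theorem decomposition_unique {C : Type} [Fintype C] {arity : C → ℕ} {S : Type*}
    (interp : ∀ c : C, (Fin (arity c) → S) → S)
    (hsep : Separated interp) (a : S) (t t' : (PF C arity).M)
    (h : IsDecomposition interp t a) (h' : IsDecomposition interp t' a) :
    t = t' :=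
  decomposition_unique_general hsep.injective_algebra h h'
end

section
/- If S is a separated C-structure with interpretation interp, then every map φ : P.M → S satisfying φ (PFunctor.M.mk ⟨c, f⟩) = interp c (fun i => φ (f i)) for all constructors c and all f : Fin (arity c) → P.M is injective. -/
open PFunctor

/-- The canonical `C`-structure on hyper-terms. -/
def mkA {C : Type} {arity : C → ℕ} (c : C) (f : Fin (arity c) → (PF C arity).M) :
    (PF C arity).M :=
  PFunctor.M.mk ⟨c, f⟩

/-! Since `interp` is injective as one map on `Σ c, (Fin (arity c) → S)`, the equation `φ s = φ t`
forces equal root labels and `φ`-equal children. So the kernel of `φ` is a bisimulation, and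
bisimilar elements of an M-type are equal. -/

theorem injective_sigma_of_pairwise_disjoint_range {ι S : Type*} {β : ι → Type*}
    {f : ∀ i, β i → S} (hinj : ∀ i, Function.Injective (f i))
    (hdisj : Pairwise fun i j => Disjoint (Set.range (f i)) (Set.range (f j))) :
    Function.Injective fun x : Σ i, β i => f x.1 x.2 := by
  rintro ⟨i, x⟩ ⟨j, y⟩ hxy
  obtain rfl : i = j := by
    by_contra hij
    exact Set.disjoint_range_iff.mp (hdisj hij) x y hxy
  exact congrArg (Sigma.mk i) (hinj i hxy)

theorem pfunctor_map_eq_map_iff {P : PFunctor} {α β S : Type*} {φ : α → S} {ψ : β → S}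
    {x : P α} {y : P β} :
    P.map φ x = P.map ψ y ↔
      ∃ a f g, x = ⟨a, f⟩ ∧ y = ⟨a, g⟩ ∧ ∀ i, φ (f i) = ψ (g i) := by
  constructor
  · obtain ⟨a, f⟩ := x
    obtain ⟨b, g⟩ := y
    intro h
    obtain ⟨rfl, hfg⟩ := Sigma.mk.inj h
    exact ⟨a, f, g, rfl, rfl, congrFun (eq_of_heq hfg)⟩
  · rintro ⟨a, f, g, rfl, rfl, hfg⟩
    exact congrArg (Sigma.mk a) (funext hfg)

theorem algebra_hom_injective_of_injective {P : PFunctor} {S : Type*} {str : P S → S}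
    (hstr : Function.Injective str) {φ : P.M → S}
    (hφ : ∀ x : P P.M, φ (M.mk x) = str (P.map φ x)) :
    Function.Injective φ := by
  have φ_eq_str (t : P.M) : φ t = str (P.map φ t.dest) := by rw [← hφ, M.mk_dest]
  refine M.bisim (fun s t => φ s = φ t) fun s t hst => ?_
  have map_dest_eq : P.map φ s.dest = P.map φ t.dest :=
    hstr (by rw [← φ_eq_str, ← φ_eq_str, hst])
  exact pfunctor_map_eq_map_iff.mp map_dest_eq

theorem hom_injective_of_separated_general {P : PFunctor} {S : Type*}
    (interp : ∀ a : P.A, (P.B a → S) → S) (hinj : ∀ a, Function.Injective (interp a))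
    (hdisj : Pairwise fun a b => Disjoint (Set.range (interp a)) (Set.range (interp b)))
    (φ : P.M → S)
    (hφ : ∀ (a : P.A) (f : P.B a → P.M), φ (M.mk ⟨a, f⟩) = interp a (fun i => φ (f i))) :
    Function.Injective φ :=
  algebra_hom_injective_of_injective (injective_sigma_of_pairwise_disjoint_range hinj hdisj)
    fun ⟨a, f⟩ => hφ a f

/-- Any homomorphism from hyper-terms into a separated `C`-structure is injective. -/
theorem hom_injective_of_separated {C : Type} [Fintype C] {arity : C → ℕ} {S : Type*}
    (interp : ∀ c : C, (Fin (arity c) → S) → S)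
    (hsep : Separated interp) (φ : (PF C arity).M → S)
    (hφ : ∀ (c : C) (f : Fin (arity c) → (PF C arity).M),
      φ (PFunctor.M.mk ⟨c, f⟩) = interp c (fun i => φ (f i))) :
    Function.Injective φ :=
  hom_injective_of_separated_general (P := PF C arity) interp hsep.1 hsep.2 φ hφ
end

section
/- In the canonical C-structure mkA on P.M, every hyper-term t is a decomposition of itself, and t is the unique hyper-term that is a decomposition of t (i.e., if t' is a decomposition of t then t' = t). -/
open PFunctor

/-!
In a separated structure, "`t` and `t'` decompose a common element" is a bisimulation: the element
determines its outermost constructor and the arguments, which the children of `t` and `t'` decompose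
in turn. Hyper-terms are determined up to bisimulation, so decompositions there are unique. The
canonical structure is separated, and equality is a decomposition relation for it.
-/

section

variable {C : Type} {arity : C → ℕ} {S : Type*} {interp : ∀ c : C, (Fin (arity c) → S) → S}

theorem Separated.sigma_injective (hsep : Separated interp) :
    Function.Injective fun x : Σ c, Fin (arity c) → S => interp x.1 x.2 := by
  rintro ⟨c, b⟩ ⟨d, b'⟩ (heq : interp c b = interp d b')
  obtain rfl : c = d := by
    by_contra hcd
    exact Set.disjoint_left.mp (hsep.2 c d hcd) ⟨b, rfl⟩ ⟨b', heq.symm⟩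
  rw [hsep.1 c heq]

theorem isDecompRel_isDecomposition : IsDecompRel interp (IsDecomposition interp) := by
  rintro t a ⟨R, hR, hta⟩
  obtain ⟨c, f, b, ht, ha, hfb⟩ := hR t a hta
  exact ⟨c, f, b, ht, ha, fun i => ⟨R, hR, hfb i⟩⟩

theorem IsDecomposition.unique (hsep : Separated interp) {t t' : (PF C arity).M} {a : S}
    (ht : IsDecomposition interp t a) (ht' : IsDecomposition interp t' a) : t = t' := by
  refine M.bisim (fun x y => ∃ a, IsDecomposition interp x a ∧ IsDecomposition interp y a)
    ?_ t t' ⟨a, ht, ht'⟩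
  rintro x y ⟨a, hx, hy⟩
  obtain ⟨c, f, b, rfl, ha, hfb⟩ := isDecompRel_isDecomposition x a hx
  obtain ⟨d, f', b', rfl, ha', hfb'⟩ := isDecompRel_isDecomposition y a hy
  have same_node : (⟨c, b⟩ : Σ c, Fin (arity c) → S) = ⟨d, b'⟩ :=
    hsep.sigma_injective (ha.symm.trans ha')
  cases same_node
  exact ⟨c, f, f', M.dest_mk _, M.dest_mk _, fun i => ⟨b i, hfb i, hfb' i⟩⟩

theorem separated_mkA : Separated (mkA (arity := arity)) := by
  refine ⟨fun c f g hfg => eq_of_heq (Sigma.mk.inj (M.mk_inj hfg)).2, fun c d hcd => ?_⟩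
  rw [Set.disjoint_left]
  rintro _ ⟨f, rfl⟩ ⟨g, hgf⟩
  exact hcd (Sigma.mk.inj (M.mk_inj hgf)).1.symm

theorem isDecompRel_mkA_eq : IsDecompRel (mkA (arity := arity)) Eq := by
  rintro t _ rfl
  exact ⟨t.dest.1, t.dest.2, t.dest.2, t.mk_dest.symm, t.mk_dest.symm, fun _ => rfl⟩

theorem isDecomposition_mkA_self (t : (PF C arity).M) :
    IsDecomposition (mkA (arity := arity)) t t :=
  ⟨Eq, isDecompRel_mkA_eq, rfl⟩

theorem canonical_decomposition_self_unique_general (t : (PF C arity).M) :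
    IsDecomposition (mkA (arity := arity)) t t ∧
      ∀ t' : (PF C arity).M, IsDecomposition (mkA (arity := arity)) t' t → t' = t :=
  ⟨isDecomposition_mkA_self t, fun _ ht' => ht'.unique separated_mkA (isDecomposition_mkA_self t)⟩

end

/-- In the canonical `C`-structure every hyper-term is its own unique decomposition. -/
theorem canonical_decomposition_self_unique {C : Type} [Fintype C] {arity : C → ℕ}
    (t : (PF C arity).M) :
    IsDecomposition (mkA (arity := arity)) t t ∧
      ∀ t' : (PF C arity).M, IsDecomposition (mkA (arity := arity)) t' t → t' = t := by
  exact canonical_decomposition_self_unique_general t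
end

section
/- Let S be a separated C-structure with interpretation interp, Rules a rule system over (ι, κ), and GS : κ → Set S, GA : κ → Set P.M corresponding prior interpretations. Let ΦS be the operator induced by Rules relative to interp and GS, and ΦA the operator induced by Rules relative to the canonical structure mkA on P.M and GA. Then for every i : ι and every a ∈ (lfp ΦS) i there exists a hyper-term t such that t is a decomposition of a and t ∈ (lfp ΦA) i. -/
open PFunctor

/-- The monotone operator on `ι → Set S` induced by a rule system `Rules` relative to
a `C`-structure `interp` on `S` and prior interpretations `G : κ → Set S`. -/
def ruleOp {C : Type} {arity : C → ℕ} {S : Type*} {ι κ : Type*}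
    (interp : ∀ c : C, (Fin (arity c) → S) → S)
    (Rules : Set (Σ _ : ι, Σ c : C, Fin (arity c) → ι ⊕ κ))
    (G : κ → Set S) : (ι → Set S) →o (ι → Set S) where
  toFun X i :=
    {a | ∃ r ∈ Rules, r.1 = i ∧ ∃ b : Fin (arity r.2.1) → S,
      a = interp r.2.1 b ∧ ∀ j,
        (∀ i', r.2.2 j = Sum.inl i' → b j ∈ X i') ∧
        (∀ k, r.2.2 j = Sum.inr k → b j ∈ G k)}
  monotone' := by
    intro X Y hXY i a ha
    obtain ⟨r, hr, hi, b, hab, hj⟩ := ha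
    exact ⟨r, hr, hi, b, hab, fun j =>
      ⟨fun i' h => hXY i' ((hj j).1 i' h), (hj j).2⟩⟩

/-- Prior interpretations `GS` on `S` and `GA` on hyper-terms correspond. -/
def Corresponds {C : Type} {arity : C → ℕ} {S : Type*} {κ : Type*}
    (interp : ∀ c : C, (Fin (arity c) → S) → S)
    (GS : κ → Set S) (GA : κ → Set (PF C arity).M) : Prop :=
  (∀ k, ∀ a ∈ GS k, ∃ t, IsDecomposition interp t a ∧ t ∈ GA k) ∧
  (∀ k (t : (PF C arity).M) (a : S), t ∈ GA k → IsDecomposition interp t a → a ∈ GS k)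

/-!
Being a decomposition is the largest decomposition relation, so it is preserved by the
constructors: if `f j` decomposes `b j` for every `j`, then `mkA c f` decomposes `interp c b`.
A relation between two `C`-structures that is preserved by the constructors carries every rule
application on one side to the same rule application on the other, so the elements related to
some member of the least fixed point over hyper-terms form a pre-fixed point of the operator on
`S`, and the least fixed point on `S` lies below it.
-/

section RuleOp

variable {C : Type} {arity : C → ℕ} {A S ι κ : Type*}

theorem mem_ruleOp_iff {interp : ∀ c : C, (Fin (arity c) → S) → S}
    {Rules : Set (Σ _ : ι, Σ c : C, Fin (arity c) → ι ⊕ κ)} {G : κ → Set S}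
    {X : ι → Set S} {i : ι} {a : S} :
    a ∈ ruleOp interp Rules G X i ↔
      ∃ (c : C) (q : Fin (arity c) → ι ⊕ κ), ⟨i, c, q⟩ ∈ Rules ∧
        ∃ b : Fin (arity c) → S, a = interp c b ∧ ∀ j, b j ∈ Sum.elim X G (q j) := by
  have mem_elim_iff (x : S) (s : ι ⊕ κ) :
      ((∀ i', s = Sum.inl i' → x ∈ X i') ∧ ∀ k, s = Sum.inr k → x ∈ G k) ↔
        x ∈ Sum.elim X G s := by
    cases s <;> simp
  constructor
  · rintro ⟨⟨_, c, q⟩, hr, rfl, b, hab, hb⟩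
    exact ⟨c, q, hr, b, hab, fun j => (mem_elim_iff _ _).1 (hb j)⟩
  · rintro ⟨c, q, hr, b, hab, hb⟩
    exact ⟨⟨i, c, q⟩, hr, rfl, b, hab, fun j => (mem_elim_iff _ _).2 (hb j)⟩

/-- A relation between two `C`-structures is *preserved by the constructors* if applying a
constructor to pointwise related arguments gives related elements; equivalently, it is a
substructure of the product structure. -/
def PreservedByConstructors (interpA : ∀ c : C, (Fin (arity c) → A) → A)
    (interpS : ∀ c : C, (Fin (arity c) → S) → S) (R : SetRel A S) : Prop :=
  ∀ (c : C) (f : Fin (arity c) → A) (b : Fin (arity c) → S),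
    (∀ j, (f j, b j) ∈ R) → (interpA c f, interpS c b) ∈ R

namespace PreservedByConstructors

variable {interpA : ∀ c : C, (Fin (arity c) → A) → A}
  {interpS : ∀ c : C, (Fin (arity c) → S) → S} {R : SetRel A S}
  {GA : κ → Set A} {GS : κ → Set S}

theorem ruleOp_image_le (hR : PreservedByConstructors interpA interpS R)
    (hG : ∀ k, GS k ⊆ R.image (GA k))
    (Rules : Set (Σ _ : ι, Σ c : C, Fin (arity c) → ι ⊕ κ)) (X : ι → Set A) :
    ruleOp interpS Rules GS (fun i => R.image (X i)) ≤
      fun i => R.image (ruleOp interpA Rules GA X i) := by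
  intro i a ha
  obtain ⟨c, q, hr, b, rfl, hb⟩ := mem_ruleOp_iff.1 ha
  have elim_subset (s : ι ⊕ κ) :
      Sum.elim (fun i => R.image (X i)) GS s ⊆ R.image (Sum.elim X GA s) := by
    rcases s with i' | k
    · exact subset_rfl
    · exact hG k
  choose f hfX hfb using fun j => elim_subset (q j) (hb j)
  exact ⟨interpA c f, mem_ruleOp_iff.2 ⟨c, q, hr, f, rfl, hfX⟩, hR c f b hfb⟩

theorem lfp_ruleOp_le_image (hR : PreservedByConstructors interpA interpS R)
    (hG : ∀ k, GS k ⊆ R.image (GA k))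
    (Rules : Set (Σ _ : ι, Σ c : C, Fin (arity c) → ι ⊕ κ)) :
    (ruleOp interpS Rules GS).lfp ≤
      fun i => R.image ((ruleOp interpA Rules GA).lfp i) := by
  apply OrderHom.lfp_le
  simpa only [OrderHom.map_lfp] using hR.ruleOp_image_le hG Rules (ruleOp interpA Rules GA).lfp

end PreservedByConstructors

end RuleOp

section Decomposition

variable {C : Type} {arity : C → ℕ} {S : Type*}
  {interp : ∀ c : C, (Fin (arity c) → S) → S}

theorem isDecomposition_mkA {c : C} {f : Fin (arity c) → (PF C arity).M}
    {b : Fin (arity c) → S} (hfb : ∀ j, IsDecomposition interp (f j) (b j)) :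
    IsDecomposition interp (mkA c f) (interp c b) := by
  refine ⟨fun t a => IsDecomposition interp t a ∨ t = mkA c f ∧ a = interp c b, ?_,
    Or.inr ⟨rfl, rfl⟩⟩
  rintro t a (hta | ⟨rfl, rfl⟩)
  · obtain ⟨d, g, e, ht, ha, hge⟩ := isDecompRel_isDecomposition t a hta
    exact ⟨d, g, e, ht, ha, fun j => Or.inl (hge j)⟩
  · exact ⟨c, f, b, rfl, rfl, fun j => Or.inl (hfb j)⟩

theorem preservedByConstructors_isDecomposition :
    PreservedByConstructors mkA interp {p | IsDecomposition interp p.1 p.2} :=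
  fun _ _ _ => isDecomposition_mkA

end Decomposition

theorem lfp_decomposition_exists_general {C : Type} {arity : C → ℕ} {S ι κ : Type*}
    (interp : ∀ c : C, (Fin (arity c) → S) → S)
    (Rules : Set (Σ _ : ι, Σ c : C, Fin (arity c) → ι ⊕ κ))
    (GS : κ → Set S) (GA : κ → Set (PF C arity).M)
    (hG : ∀ k, ∀ a ∈ GS k, ∃ t, IsDecomposition interp t a ∧ t ∈ GA k) :
    ∀ i : ι, ∀ a ∈ OrderHom.lfp (ruleOp interp Rules GS) i,
      ∃ t : (PF C arity).M, IsDecomposition interp t a ∧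
        t ∈ OrderHom.lfp (ruleOp (mkA (arity := arity)) Rules GA) i := by
  intro i a ha
  have hGS (k : κ) : GS k ⊆ SetRel.image {p | IsDecomposition interp p.1 p.2} (GA k) :=
    fun a ha => (hG k a ha).imp fun _ => And.symm
  obtain ⟨t, ht, hta⟩ :=
    preservedByConstructors_isDecomposition.lfp_ruleOp_le_image hGS Rules i ha
  exact ⟨t, hta, ht⟩

/-- Inductive types in a separated `D`-correct structure: every element of the least
fixed point has a decomposition lying in the least fixed point over hyper-terms. -/
theorem lfp_decomposition_exists {C : Type} [Fintype C] {arity : C → ℕ} {S : Type*}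
    {ι κ : Type*}
    (interp : ∀ c : C, (Fin (arity c) → S) → S) (hsep : Separated interp)
    (Rules : Set (Σ _ : ι, Σ c : C, Fin (arity c) → ι ⊕ κ))
    (GS : κ → Set S) (GA : κ → Set (PF C arity).M)
    (hcorr : Corresponds interp GS GA) :
    ∀ i : ι, ∀ a ∈ OrderHom.lfp (ruleOp interp Rules GS) i,
      ∃ t : (PF C arity).M, IsDecomposition interp t a ∧
        t ∈ OrderHom.lfp (ruleOp (mkA (arity := arity)) Rules GA) i :=
  lfp_decomposition_exists_general interp Rules GS GA hcorr.1
end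

section
/- Let S be a separated C-structure with interpretation interp, Rules a rule system over (ι, κ), and GS : κ → Set S, GA : κ → Set P.M corresponding prior interpretations. Let ΦS be the operator induced by Rules relative to interp and GS, and ΦA the operator induced by Rules relative to the canonical structure mkA on P.M and GA. Then for every i : ι, every hyper-term t ∈ (gfp ΦA) i, and every a ∈ S such that t is a decomposition of a, one has a ∈ (gfp ΦS) i. -/
open PFunctor

/-! Decomposition is compatible with rules: a rule deriving the term `mk ⟨c, f⟩` also derives any
element it decomposes, because the constructor of a term is unique and the subterms `f j` decompose
the corresponding arguments. Hence the elements with a decomposition in the greatest fixed point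
over hyper-terms form a post-fixed point of the operator over `S`. -/

section

variable {C : Type} {arity : C → ℕ} {S ι κ : Type*} {interp : ∀ c : C, (Fin (arity c) → S) → S}

theorem IsDecomposition.exists_eq_interp {c : C} {f : Fin (arity c) → (PF C arity).M} {a : S}
    (h : IsDecomposition interp (mkA c f) a) :
    ∃ b, a = interp c b ∧ ∀ j, IsDecomposition interp (f j) (b j) := by
  obtain ⟨R, hR, hRa⟩ := h
  obtain ⟨d, g, b, hmk, hab, hgb⟩ := hR _ _ hRa
  cases M.mk_inj hmk
  exact ⟨b, hab, fun j => ⟨R, hR, hgb j⟩⟩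

variable (interp) in
/-- The image of a family of sets of hyper-terms under the relation `IsDecomposition interp`. The
index type is arbitrary so that it applies both to the new and to the previously defined types. -/
def decompositionImage {α : Type*} (X : α → Set (PF C arity).M) (x : α) : Set S :=
  {a | ∃ t ∈ X x, IsDecomposition interp t a}

theorem decompositionImage_ruleOp_le (Rules : Set (Σ _ : ι, Σ c : C, Fin (arity c) → ι ⊕ κ))
    {GS : κ → Set S} {GA : κ → Set (PF C arity).M} (hG : decompositionImage interp GA ≤ GS)
    (X : ι → Set (PF C arity).M) :
    decompositionImage interp (ruleOp mkA Rules GA X) ≤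
      ruleOp interp Rules GS (decompositionImage interp X) := by
  rintro i a ⟨_, ⟨r, hr, hri, f, rfl, hf⟩, hdec⟩
  obtain ⟨b, hab, hfb⟩ := hdec.exists_eq_interp
  exact ⟨r, hr, hri, b, hab, fun j =>
    ⟨fun i' hq => ⟨f j, (hf j).1 i' hq, hfb j⟩,
      fun k hq => hG k ⟨f j, (hf j).2 k hq, hfb j⟩⟩⟩

theorem decompositionImage_gfp_le (Rules : Set (Σ _ : ι, Σ c : C, Fin (arity c) → ι ⊕ κ))
    {GS : κ → Set S} {GA : κ → Set (PF C arity).M} (hG : decompositionImage interp GA ≤ GS) :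
    decompositionImage interp (OrderHom.gfp (ruleOp mkA Rules GA)) ≤
      OrderHom.gfp (ruleOp interp Rules GS) := by
  have hpost := decompositionImage_ruleOp_le Rules hG (OrderHom.gfp (ruleOp mkA Rules GA))
  rw [OrderHom.map_gfp] at hpost
  exact OrderHom.le_gfp _ hpost

theorem mem_gfp_of_decomposition_general
    (Rules : Set (Σ _ : ι, Σ c : C, Fin (arity c) → ι ⊕ κ))
    {GS : κ → Set S} {GA : κ → Set (PF C arity).M}
    (hG : ∀ k, ∀ t ∈ GA k, ∀ a, IsDecomposition interp t a → a ∈ GS k)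
    {i : ι} {t : (PF C arity).M} (ht : t ∈ OrderHom.gfp (ruleOp mkA Rules GA) i)
    {a : S} (hta : IsDecomposition interp t a) :
    a ∈ OrderHom.gfp (ruleOp interp Rules GS) i :=
  decompositionImage_gfp_le Rules (fun k a ⟨t, ht, hta⟩ => hG k t ht a hta) i ⟨t, ht, hta⟩

end

/-- Coinductive types, converse direction: any element whose decomposition lies in the
greatest fixed point over hyper-terms lies in the greatest fixed point over `S`. -/
theorem mem_gfp_of_decomposition {C : Type} [Fintype C] {arity : C → ℕ} {S : Type*}
    {ι κ : Type*}
    (interp : ∀ c : C, (Fin (arity c) → S) → S) (hsep : Separated interp)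
    (Rules : Set (Σ _ : ι, Σ c : C, Fin (arity c) → ι ⊕ κ))
    (GS : κ → Set S) (GA : κ → Set (PF C arity).M)
    (hcorr : Corresponds interp GS GA) :
    ∀ i : ι, ∀ t ∈ OrderHom.gfp (ruleOp (mkA (arity := arity)) Rules GA) i,
      ∀ a : S, IsDecomposition interp t a →
        a ∈ OrderHom.gfp (ruleOp interp Rules GS) i := by
  intro i t ht a hta
  exact mem_gfp_of_decomposition_general Rules (fun k t ht a => hcorr.2 k t a ht) ht hta
end

section
/- Let C := Bool with arity ≡ 1 (two unary constructors), and let S := Bool carry the C-structure interp c := fun _ => c (each constructor interpreted as a constant function). Then every hyper-term t ∈ P.M is a decomposition of the Bool labelling its root, i.e. of (PFunctor.M.dest t).fst; consequently the set of decompositions of the element true (and likewise of false) is uncountable (not countable). Hence in a non-separated structure an element may have uncountably many decompositions. -/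
open PFunctor

/-!
When every constructor is interpreted as a constant, relating each hyper-term to the value of its
root label is a decomposition relation, so every hyper-term with root `c` decomposes the value
of `c`. Below the root the labels are free: giving all nodes of depth `n` the label `s n` embeds
the label sequences into the hyper-terms, and by the theorem of Cantor there are uncountably many
sequences.
-/

theorem uncountable_fun_of_infinite_of_nontrivial (ι α : Type*) [Infinite ι] [Nontrivial α] :
    Uncountable (ι → α) := by
  have one_lt_mk : 1 < Cardinal.mk α := Cardinal.one_lt_iff_nontrivial.2 ‹_›
  rw [← Cardinal.aleph0_lt_mk_iff, Cardinal.mk_pi, Cardinal.prod_const]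
  exact (Cardinal.aleph0_le_lift.2 (Cardinal.aleph0_le_mk ι)).trans_lt
    (Cardinal.cantor' _ (Cardinal.one_lt_lift_iff.2 one_lt_mk))

section LevelTree

variable {P : PFunctor}

/-- The tree in which every node of depth `n` carries the label `s n`: the encoding of sequences of
labels as elements of the M-type. -/
def levelTree : (ℕ → P.A) → P.M :=
  M.corec fun s => ⟨s 0, fun _ n => s (n + 1)⟩

theorem levelTree_eq_mk (s : ℕ → P.A) :
    levelTree s = M.mk ⟨s 0, fun _ => levelTree fun n => s (n + 1)⟩ :=
  M.corec_def _ s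

theorem mk_const_inj {a b : P.A} [Nonempty (P.B a)] {t u : P.M} :
    M.mk ⟨a, fun _ => t⟩ = M.mk ⟨b, fun _ => u⟩ ↔ a = b ∧ t = u := by
  refine ⟨fun h => ?_, by rintro ⟨rfl, rfl⟩; rfl⟩
  obtain ⟨rfl, children_eq⟩ := Sigma.mk.inj (M.mk_inj h)
  exact ⟨rfl, Function.const_injective (eq_of_heq children_eq)⟩

theorem levelTree_eq_levelTree_iff [∀ a, Nonempty (P.B a)] {s s' : ℕ → P.A} :
    levelTree s = levelTree s' ↔
      s 0 = s' 0 ∧ levelTree (fun n => s (n + 1)) = levelTree fun n => s' (n + 1) := by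
  rw [levelTree_eq_mk s, levelTree_eq_mk s', mk_const_inj]

theorem levelTree_injective [∀ a, Nonempty (P.B a)] :
    Function.Injective (levelTree : (ℕ → P.A) → P.M) := by
  intro s s' h
  funext n
  induction n generalizing s s' with
  | zero => exact (levelTree_eq_levelTree_iff.1 h).1
  | succ _ ih => exact ih (levelTree_eq_levelTree_iff.1 h).2

theorem not_countable_setOf_dest_fst_eq [Nontrivial P.A] [∀ a, Nonempty (P.B a)] (a : P.A) :
    ¬ {t : P.M | (M.dest t).fst = a}.Countable := by
  intro countable_root
  have graft_injective :
      Function.Injective fun s : ℕ → P.A => M.mk ⟨a, fun _ => levelTree s⟩ :=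
    fun _ _ h => levelTree_injective (mk_const_inj.1 h).2
  have := uncountable_fun_of_infinite_of_nontrivial ℕ P.A
  exact Set.not_countable_univ ((countable_root.preimage graft_injective).mono fun _ _ => rfl)

end LevelTree

section ConstantInterpretation

variable {C : Type} {arity : C → ℕ} {S : Type*} (k : C → S)

theorem isDecomposition_const_dest_fst (t : (PF C arity).M) :
    IsDecomposition (fun c _ => k c) t (k (M.dest t).fst) := by
  refine ⟨fun t a => a = k (M.dest t).fst, fun t a h => ?_, rfl⟩
  exact ⟨(M.dest t).fst, (M.dest t).snd, _, (M.mk_dest t).symm, h, fun _ => rfl⟩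

theorem not_countable_setOf_isDecomposition_const [Nontrivial C] (arity_pos : ∀ c, 0 < arity c)
    (c : C) : ¬ {t : (PF C arity).M | IsDecomposition (fun c _ => k c) t (k c)}.Countable := by
  have : Nontrivial (PF C arity).A := ‹Nontrivial C›
  have : ∀ d, Nonempty ((PF C arity).B d) := fun d => ⟨⟨0, arity_pos d⟩⟩
  refine mt (Set.Countable.mono ?_) (not_countable_setOf_dest_fst_eq (P := PF C arity) c)
  rintro t rfl
  exact isDecomposition_const_dest_fst k t

theorem nonseparated_uncountably_many_decompositions_general [Nontrivial C]
    (arity_pos : ∀ c, 0 < arity c) :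
    (∀ t : (PF C arity).M, IsDecomposition (fun c _ => k c) t (k (M.dest t).fst)) ∧
      ∀ c, ¬ {t : (PF C arity).M | IsDecomposition (fun c _ => k c) t (k c)}.Countable :=
  ⟨isDecomposition_const_dest_fst k, not_countable_setOf_isDecomposition_const k arity_pos⟩

end ConstantInterpretation

/-- In the non-separated `Bool`-structure on `Bool` where each of the two unary
constructors is interpreted as a constant function, every hyper-term is a decomposition
of its root label; hence `true` (and `false`) has uncountably many decompositions. -/
theorem nonseparated_uncountably_many_decompositions :
    (∀ t : (PF Bool (fun _ => 1)).M,
      IsDecomposition (S := Bool) (fun c => fun _ => c) t (PFunctor.M.dest t).fst) ∧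
    ¬ (Set.Countable {t : (PF Bool (fun _ => 1)).M |
        IsDecomposition (S := Bool) (fun c => fun _ => c) t true}) ∧
    ¬ (Set.Countable {t : (PF Bool (fun _ => 1)).M |
        IsDecomposition (S := Bool) (fun c => fun _ => c) t false}) := by
  obtain ⟨root, uncountable⟩ := nonseparated_uncountably_many_decompositions_general
    (C := Bool) (arity := fun _ => 1) id fun _ => Nat.one_pos
  exact ⟨root, uncountable true, uncountable false⟩
end
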